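/- Let X ⊆ ℝⁿ be compact, β > 0, let x : [0,∞) → X be locally absolutely continuous with essentially bounded derivative, and let v : ℝⁿ → ℝ be continuously differentiable. Then the function t ↦ e^{−βt} ∇v(x(t)) · ẋ(t) is Lebesgue integrable on [0,∞) and ∫_0^∞ e^{−βt} ∇v(x(t)) · ẋ(t) dt = β ∫_0^∞ e^{−βt} v(x(t)) dt − v(x(0)); in particular the boundary term at infinity vanishes because X is bounded. -/

import Mathlib

open MeasureTheory

/-!
The chain rule makes `y = v ∘ x` a primitive of `y' = ∇v(x) · ẋ`, which is bounded because `∇v` is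
bounded on `X`. The rest is the rule `L[y'] = β L[y] - y(0)` for the Laplace transform. If
`e^{-βt} y'` is integrable then so is `e^{-βt} y`: integrating by parts over `[0, T]` bounds the
discounted integral of `w(t) = ‖y(0)‖ + ∫₀ᵗ ‖y'‖`, which dominates `‖y‖`, uniformly in `T`. Finally
`z = e^{-βt} y` is an integrable primitive of the integrable function `e^{-βt} (y' - β y)`, so `z`
has a limit at infinity, this limit is `0`, and `∫ e^{-βt} (y' - β y) = -z(0)`.
-/

open Filter Set Topology

section Primitive

variable {E F : Type*} [NormedAddCommGroup E] [NormedSpace ℝ E]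
  [NormedAddCommGroup F] [NormedSpace ℝ F]

theorem absolutelyContinuousOnInterval_of_dist_le {X Y : Type*} [PseudoMetricSpace X]
    [PseudoMetricSpace Y] {f : ℝ → X} {g : ℝ → Y} {a b K : ℝ}
    (hg : AbsolutelyContinuousOnInterval g a b)
    (hfg : ∀ s ∈ uIcc a b, ∀ t ∈ uIcc a b, dist (f s) (f t) ≤ K * dist (g s) (g t)) :
    AbsolutelyContinuousOnInterval f a b := by
  have hKg := Tendsto.const_mul K hg
  rw [mul_zero] at hKg
  refine squeeze_zero' (.of_forall fun I => Finset.sum_nonneg fun _ _ => dist_nonneg) ?_ hKg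
  filter_upwards [mem_inf_of_right (mem_principal_self _)] with I hI
  rw [Finset.mul_sum]
  exact Finset.sum_le_sum fun i hi => hfg _ (hI.1 i hi).1 _ (hI.1 i hi).2

theorem absolutelyContinuousOnInterval_integral {f : ℝ → E} {a b : ℝ}
    (hf : IntervalIntegrable f volume a b) :
    AbsolutelyContinuousOnInterval (fun t => ∫ s in a..t, f s) a b := by
  refine absolutelyContinuousOnInterval_of_dist_le (K := 1)
    (hf.norm.absolutelyContinuousOnInterval_intervalIntegral left_mem_uIcc) fun s hs t ht => ?_
  have hfs := hf.mono_set (uIcc_subset_uIcc_left hs)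
  have hft := hf.mono_set (uIcc_subset_uIcc_left ht)
  rw [one_mul, dist_eq_norm, dist_eq_norm, Real.norm_eq_abs,
    intervalIntegral.integral_interval_sub_left hfs hft,
    intervalIntegral.integral_interval_sub_left hfs.norm hft.norm]
  exact intervalIntegral.norm_integral_le_abs_integral_norm

theorem eq_add_integral_of_ae_hasDerivAt [CompleteSpace E] {f f' : ℝ → E} {a b : ℝ}
    (hf : AbsolutelyContinuousOnInterval f a b) (hf' : IntervalIntegrable f' volume a b)
    (hderiv : ∀ᵐ t, t ∈ uIcc a b → HasDerivAt f (f' t) t) :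
    f b = f a + ∫ t in a..b, f' t := by
  have hconst : ∀ᵐ t, t ∈ uIcc a b → HasDerivAt (f - fun t => ∫ s in a..t, f' s) 0 t := by
    filter_upwards [hderiv, hf'.ae_hasDerivAt_integral] with t hft hint ht
    simpa using (hft ht).sub (hint ht a left_mem_uIcc)
  obtain ⟨c, hc⟩ :=
    (hf.sub (absolutelyContinuousOnInterval_integral hf')).const_of_ae_hasDerivAt_zero hconst
  have ha := hc a left_mem_uIcc
  have hb := hc b right_mem_uIcc
  simp only [Pi.sub_apply, intervalIntegral.integral_same, sub_zero] at ha hb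
  rw [ha, ← hb, sub_add_cancel]

theorem intervalIntegrable_clm_apply {L : ℝ → E →L[ℝ] F} {f : ℝ → E} {a b : ℝ}
    (hf : IntervalIntegrable f volume a b) (hL : ContinuousOn L (uIcc a b)) :
    IntervalIntegrable (fun t => L t (f t)) volume a b := by
  obtain ⟨M, hM⟩ := isCompact_uIcc.exists_bound_of_continuousOn hL
  refine (hf.norm.const_mul M).mono_fun' ?_ ?_
  · exact (ContinuousLinearMap.id ℝ (E →L[ℝ] F)).aestronglyMeasurable_comp₂
      ((hL.mono uIoc_subset_uIcc).aestronglyMeasurable measurableSet_uIoc)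
      hf.aestronglyMeasurable_restrict_uIoc
  · filter_upwards [ae_restrict_mem measurableSet_uIoc] with t ht
    exact (L t).le_of_opNorm_le (hM t (uIoc_subset_uIcc ht)) (f t)

theorem integrableOn_exp_smul_of_ae_bound {f : ℝ → E} {a β C : ℝ} (hβ : 0 < β)
    (hf : AEStronglyMeasurable f (volume.restrict (Ici a)))
    (hC : ∀ᵐ t ∂volume.restrict (Ici a), ‖f t‖ ≤ C) :
    IntegrableOn (fun t => Real.exp (-β * t) • f t) (Ici a) :=
  ((integrableOn_Ici_iff_integrableOn_Ioi).2
    (integrableOn_exp_mul_Ioi (neg_lt_zero.2 hβ) a)).smul_bdd C hf hC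

/-- `f` is locally absolutely continuous on `[a, ∞)` with almost everywhere derivative `f'`, encoded
as `f` being an indefinite integral of the locally integrable function `f'`. -/
structure IsPrimitiveOnIci (f f' : ℝ → E) (a : ℝ) : Prop where
  intervalIntegrable : ∀ t, a ≤ t → IntervalIntegrable f' volume a t
  eq_add_integral : ∀ t, a ≤ t → f t = f a + ∫ s in a..t, f' s

namespace IsPrimitiveOnIci

variable {f f' : ℝ → E} {a : ℝ}

theorem absolutelyContinuousOnInterval (hf : IsPrimitiveOnIci f f' a) {t : ℝ} (ht : a ≤ t) :
    AbsolutelyContinuousOnInterval f a t := by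
  refine absolutelyContinuousOnInterval_of_dist_le (K := 1)
    (absolutelyContinuousOnInterval_integral (hf.intervalIntegrable t ht)) fun r hr s hs => ?_
  rw [uIcc_of_le ht] at hr hs
  rw [hf.eq_add_integral r hr.1, hf.eq_add_integral s hs.1, dist_add_left, one_mul]

theorem continuousOn_uIcc (hf : IsPrimitiveOnIci f f' a) {t : ℝ} (ht : a ≤ t) :
    ContinuousOn f (uIcc a t) :=
  (hf.absolutelyContinuousOnInterval ht).continuousOn

theorem continuousOn (hf : IsPrimitiveOnIci f f' a) : ContinuousOn f (Ici a) := by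
  intro t ht
  have hle : a ≤ t + 1 := (mem_Ici.1 ht).trans (lt_add_one t).le
  have hcont := hf.continuousOn_uIcc hle
  rw [uIcc_of_le hle, ← Ici_inter_Iic] at hcont
  exact (hcont t ⟨ht, (lt_add_one t).le⟩).mono_of_mem_nhdsWithin
    (inter_mem_nhdsWithin _ (Iic_mem_nhds (lt_add_one t)))

theorem aestronglyMeasurable_deriv (hf : IsPrimitiveOnIci f f' a) :
    AEStronglyMeasurable f' (volume.restrict (Ici a)) := by
  have hcover : ⋃ k : ℕ, Ioc a (a + k) = Ioi a :=
    iUnion_Ioc_eq_Ioi_self_iff.2 fun t _ =>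
      (exists_nat_ge (t - a)).imp fun _ hk => by linarith
  rw [← restrict_Ioi_eq_restrict_Ici, ← hcover, aestronglyMeasurable_iUnion_iff]
  exact fun k => (hf.intervalIntegrable _ (by simp)).aestronglyMeasurable

theorem ae_hasDerivAt [CompleteSpace E] (hf : IsPrimitiveOnIci f f' a) :
    ∀ᵐ t, a < t → HasDerivAt f (f' t) t := by
  have hint (k : ℕ) := (hf.intervalIntegrable (a + k) (by simp)).ae_hasDerivAt_integral
  filter_upwards [ae_all_iff.2 hint] with t ht hat
  obtain ⟨k, hk⟩ := exists_nat_ge (t - a)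
  have hmem : t ∈ uIcc a (a + k) := by
    rw [uIcc_of_le (by simp)]
    exact ⟨hat.le, by linarith⟩
  refine ((ht k hmem a left_mem_uIcc).const_add (f a)).congr_of_eventuallyEq ?_
  filter_upwards [eventually_gt_nhds hat] with s hs using hf.eq_add_integral s hs.le

theorem of_absolutelyContinuousOnInterval [CompleteSpace E]
    (hf : ∀ t, a ≤ t → AbsolutelyContinuousOnInterval f a t)
    (hf' : ∀ t, a ≤ t → IntervalIntegrable f' volume a t)
    (hderiv : ∀ᵐ t, a < t → HasDerivAt f (f' t) t) : IsPrimitiveOnIci f f' a where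
  intervalIntegrable := hf'
  eq_add_integral t ht := by
    refine eq_add_integral_of_ae_hasDerivAt (hf t ht) (hf' t ht) ?_
    filter_upwards [hderiv, Measure.ae_ne volume a] with s hs hsa hmem
    rw [uIcc_of_le ht] at hmem
    exact hs (hmem.1.lt_of_ne' hsa)

theorem comp_contDiff [CompleteSpace E] [CompleteSpace F] (hf : IsPrimitiveOnIci f f' a)
    {v : E → F} (hv : ContDiff ℝ 1 v) :
    IsPrimitiveOnIci (fun t => v (f t)) (fun t => fderiv ℝ v (f t) (f' t)) a := by
  refine of_absolutelyContinuousOnInterval (fun t ht => ?_) (fun t ht => ?_) ?_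
  · have hcompact := isCompact_uIcc.image_of_continuousOn (hf.continuousOn_uIcc ht)
    obtain ⟨K, hK⟩ :=
      hv.locallyLipschitz.locallyLipschitzOn.exists_lipschitzOnWith_of_compact hcompact
    exact absolutelyContinuousOnInterval_of_dist_le (hf.absolutelyContinuousOnInterval ht)
      fun r hr s hs => hK.dist_le_mul _ (mem_image_of_mem f hr) _ (mem_image_of_mem f hs)
  · exact intervalIntegrable_clm_apply (hf.intervalIntegrable t ht)
      ((hv.continuous_fderiv one_ne_zero).comp_continuousOn (hf.continuousOn_uIcc ht))
  · filter_upwards [hf.ae_hasDerivAt] with t ht hat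
    exact (hv.differentiable one_ne_zero (f t)).hasFDerivAt.comp_hasDerivAt t (ht hat)

theorem smul [CompleteSpace E] {φ φ' : ℝ → ℝ} (hφ : IsPrimitiveOnIci φ φ' a)
    (hf : IsPrimitiveOnIci f f' a) :
    IsPrimitiveOnIci (fun t => φ t • f t) (fun t => φ t • f' t + φ' t • f t) a := by
  refine of_absolutelyContinuousOnInterval (fun t ht => ?_) (fun t ht => ?_) ?_
  · exact (hφ.absolutelyContinuousOnInterval ht).smul (hf.absolutelyContinuousOnInterval ht)
  · exact ((hf.intervalIntegrable t ht).continuousOn_smul (hφ.continuousOn_uIcc ht)).add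
      ((hφ.intervalIntegrable t ht).smul_continuousOn (hf.continuousOn_uIcc ht))
  · filter_upwards [hφ.ae_hasDerivAt, hf.ae_hasDerivAt] with t hφt hft hat
    exact (hφt hat).smul (hft hat)

theorem exp_smul [CompleteSpace E] (hf : IsPrimitiveOnIci f f' a) (c : ℝ) :
    IsPrimitiveOnIci (fun t => Real.exp (c * t) • f t)
      (fun t => Real.exp (c * t) • f' t + c • Real.exp (c * t) • f t) a := by
  have hexp : IsPrimitiveOnIci (fun t => Real.exp (c * t)) (fun t => c * Real.exp (c * t)) a := by
    have hderiv (t : ℝ) : HasDerivAt (fun t => Real.exp (c * t)) (c * Real.exp (c * t)) t := by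
      simpa [mul_comm] using ((hasDerivAt_id t).const_mul c).exp
    have hint (t : ℝ) : IntervalIntegrable (fun t => c * Real.exp (c * t)) volume a t :=
      Continuous.intervalIntegrable (by fun_prop) a t
    refine ⟨fun t _ => hint t, fun t _ => ?_⟩
    rw [intervalIntegral.integral_eq_sub_of_hasDerivAt (fun s _ => hderiv s) (hint t),
      add_sub_cancel]
  simpa only [mul_smul] using hexp.smul hf

theorem integral_Ici_eq_neg (hf : IsPrimitiveOnIci f f' a) (hint : IntegrableOn f (Ici a))
    (hint' : IntegrableOn f' (Ici a)) : ∫ t in Ici a, f' t = -f a := by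
  have hlim : Tendsto f atTop (𝓝 (f a + ∫ t in Ici a, f' t)) := by
    rw [integral_Ici_eq_integral_Ioi]
    refine ((intervalIntegral_tendsto_integral_Ioi a (hint'.mono_set Ioi_subset_Ici_self)
      tendsto_id).const_add (f a)).congr' ?_
    filter_upwards [eventually_ge_atTop a] with t ht using (hf.eq_add_integral t ht).symm
  have hzero : f a + ∫ t in Ici a, f' t = 0 := by
    refine IntegrableAtFilter.eq_zero_of_tendsto ⟨Ici a, Ici_mem_atTop a, hint⟩
      (fun s hs => ?_) hlim
    obtain ⟨b, hb⟩ := mem_atTop_sets.1 hs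
    exact measure_mono_top (show Ici b ⊆ s from hb) Real.volume_Ici
  exact eq_neg_of_add_eq_zero_right hzero

theorem mul_integral_exp_mul_le {w w' : ℝ → ℝ} (hw : IsPrimitiveOnIci w w' a) (β : ℝ) {T : ℝ}
    (hT : a ≤ T) (hwT : 0 ≤ w T) :
    β * ∫ t in a..T, Real.exp (-β * t) * w t
      ≤ Real.exp (-β * a) * w a + ∫ t in a..T, Real.exp (-β * t) * w' t := by
  have hint_w : IntervalIntegrable (fun t => Real.exp (-β * t) * w t) volume a T :=
    ((hw.exp_smul (-β)).continuousOn_uIcc hT).intervalIntegrable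
  have hint_w' : IntervalIntegrable (fun t => Real.exp (-β * t) * w' t) volume a T :=
    (hw.intervalIntegrable T hT).continuousOn_mul (by fun_prop)
  have hparts := (hw.exp_smul (-β)).eq_add_integral T hT
  simp only [smul_eq_mul] at hparts
  rw [intervalIntegral.integral_add hint_w' (hint_w.const_mul (-β)),
    intervalIntegral.integral_const_mul] at hparts
  have hnonneg : 0 ≤ Real.exp (-β * T) * w T := mul_nonneg (Real.exp_nonneg _) hwT
  linarith

theorem integrableOn_exp_mul_of_nonneg {w w' : ℝ → ℝ} {β : ℝ} (hβ : 0 < β)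
    (hw : IsPrimitiveOnIci w w' a) (hw_nonneg : ∀ t, a ≤ t → 0 ≤ w t)
    (hint : IntegrableOn (fun t => Real.exp (-β * t) * w' t) (Ici a)) :
    IntegrableOn (fun t => Real.exp (-β * t) * w t) (Ici a) := by
  have hcont : ContinuousOn (fun t => Real.exp (-β * t) * w t) (Ici a) :=
    (hw.exp_smul (-β)).continuousOn
  rw [integrableOn_Ici_iff_integrableOn_Ioi]
  refine integrableOn_Ioi_of_intervalIntegral_norm_bounded
    ((Real.exp (-β * a) * w a + ∫ t in Ici a, ‖Real.exp (-β * t) * w' t‖) / β) a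
    (fun T => (hcont.mono Icc_subset_Ici_self).integrableOn_Icc.mono_set Ioc_subset_Icc_self)
    tendsto_id ?_
  filter_upwards [eventually_ge_atTop a] with T hT
  have hnorm : ∫ t in a..T, ‖Real.exp (-β * t) * w t‖ = ∫ t in a..T, Real.exp (-β * t) * w t :=
    intervalIntegral.integral_congr fun t ht => Real.norm_of_nonneg
      (mul_nonneg (Real.exp_nonneg _) (hw_nonneg t (uIcc_of_le hT ▸ ht).1))
  rw [id, hnorm, le_div_iff₀' hβ]
  calc β * ∫ t in a..T, Real.exp (-β * t) * w t
    _ ≤ Real.exp (-β * a) * w a + ∫ t in a..T, Real.exp (-β * t) * w' t :=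
      hw.mul_integral_exp_mul_le β hT (hw_nonneg T hT)
    _ ≤ Real.exp (-β * a) * w a + ∫ t in a..T, ‖Real.exp (-β * t) * w' t‖ := by
      gcongr
      exact (Real.le_norm_self _).trans (intervalIntegral.norm_integral_le_integral_norm hT)
    _ ≤ Real.exp (-β * a) * w a + ∫ t in Ici a, ‖Real.exp (-β * t) * w' t‖ := by
      rw [intervalIntegral.integral_of_le hT]
      exact add_le_add le_rfl (setIntegral_mono_set hint.norm (.of_forall fun _ => norm_nonneg _)
        (Ioc_subset_Icc_self.trans Icc_subset_Ici_self).eventuallyLE)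

theorem integrableOn_exp_smul {β : ℝ} (hβ : 0 < β) (hf : IsPrimitiveOnIci f f' a)
    (hint : IntegrableOn (fun t => Real.exp (-β * t) • f' t) (Ici a)) :
    IntegrableOn (fun t => Real.exp (-β * t) • f t) (Ici a) := by
  have hnorm (g : ℝ → E) (t : ℝ) : ‖Real.exp (-β * t) • g t‖ = Real.exp (-β * t) * ‖g t‖ := by
    rw [norm_smul, Real.norm_of_nonneg (Real.exp_nonneg _)]
  have hw : IsPrimitiveOnIci (fun t => ‖f a‖ + ∫ s in a..t, ‖f' s‖) (fun t => ‖f' t‖) a :=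
    ⟨fun t ht => (hf.intervalIntegrable t ht).norm, fun t _ => by simp⟩
  have hf_le (t : ℝ) (ht : a ≤ t) : ‖f t‖ ≤ ‖f a‖ + ∫ s in a..t, ‖f' s‖ := by
    rw [hf.eq_add_integral t ht]
    exact norm_add_le_of_le le_rfl (intervalIntegral.norm_integral_le_integral_norm ht)
  have hint_w := hw.integrableOn_exp_mul_of_nonneg hβ
    (fun t ht => (norm_nonneg _).trans (hf_le t ht))
    (by simpa only [IntegrableOn, hnorm] using hint.norm)
  refine hint_w.mono'
    ((ContinuousOn.smul (by fun_prop) hf.continuousOn).aestronglyMeasurable measurableSet_Ici) ?_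
  filter_upwards [ae_restrict_mem measurableSet_Ici] with t ht
  rw [hnorm]
  gcongr
  exact hf_le t ht

theorem integral_exp_smul_deriv [CompleteSpace E] {β : ℝ} (hβ : 0 < β)
    (hf : IsPrimitiveOnIci f f' a)
    (hint : IntegrableOn (fun t => Real.exp (-β * t) • f' t) (Ici a)) :
    ∫ t in Ici a, Real.exp (-β * t) • f' t
      = β • (∫ t in Ici a, Real.exp (-β * t) • f t) - Real.exp (-β * a) • f a := by
  have hint_f := hf.integrableOn_exp_smul hβ hint
  have hparts := (hf.exp_smul (-β)).integral_Ici_eq_neg hint_f (hint.add (hint_f.smul (-β)))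
  have hsum := integral_add hint (hint_f.smul (-β))
  simp only [Pi.smul_apply] at hsum
  rw [hsum, integral_smul, neg_smul] at hparts
  rw [sub_eq_add_neg, ← hparts]
  abel

end IsPrimitiveOnIci

theorem exists_ae_norm_fderiv_apply_le {α : Type*} [MeasurableSpace α] {μ : Measure α} {X : Set E}
    (hX : IsCompact X) {x d : α → E} (hxX : ∀ᵐ t ∂μ, x t ∈ X) {C : ℝ} (hd : ∀ᵐ t ∂μ, ‖d t‖ ≤ C)
    {v : E → F} (hv : ContDiff ℝ 1 v) : ∃ M, ∀ᵐ t ∂μ, ‖fderiv ℝ v (x t) (d t)‖ ≤ M := by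
  obtain ⟨K, hK⟩ := hX.exists_bound_of_continuousOn (hv.continuous_fderiv one_ne_zero).continuousOn
  refine ⟨K * C, ?_⟩
  filter_upwards [hxX, hd] with t hxt hdt
  exact (fderiv ℝ v (x t)).le_of_opNorm_le_of_le (hK _ hxt) hdt

theorem discounted_integration_by_parts_general [CompleteSpace E] [CompleteSpace F]
    {β : ℝ} (hβ : 0 < β) {x d : ℝ → E} (hx : IsPrimitiveOnIci x d 0)
    {v : E → F} (hv : ContDiff ℝ 1 v) {M : ℝ}
    (hM : ∀ᵐ t ∂volume.restrict (Ici (0 : ℝ)), ‖fderiv ℝ v (x t) (d t)‖ ≤ M) :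
    IntegrableOn (fun t => Real.exp (-β * t) • fderiv ℝ v (x t) (d t)) (Ici (0 : ℝ)) ∧
    ∫ t in Ici (0 : ℝ), Real.exp (-β * t) • fderiv ℝ v (x t) (d t)
      = β • (∫ t in Ici (0 : ℝ), Real.exp (-β * t) • v (x t)) - v (x 0) := by
  have hvx := hx.comp_contDiff hv
  have hint := integrableOn_exp_smul_of_ae_bound hβ hvx.aestronglyMeasurable_deriv hM
  exact ⟨hint, by simpa using hvx.integral_exp_smul_deriv hβ hint⟩

end Primitive

/-- Discounted integration by parts over the infinite horizon: if `x : [0,∞) → X ⊆ ℝⁿ`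
(`X` compact) is locally absolutely continuous (encoded via the integral representation
`x t = x 0 + ∫_0^t d` with `d` its a.e. derivative) with essentially bounded derivative,
and `v` is continuously differentiable, then `t ↦ e^{-βt} ∇v(x(t))·ẋ(t)` is Lebesgue
integrable on `[0,∞)` and
`∫_0^∞ e^{-βt} ∇v(x(t))·ẋ(t) dt = β ∫_0^∞ e^{-βt} v(x(t)) dt − v(x(0))`. -/
theorem discounted_integration_by_parts {n : ℕ}
    (X : Set (EuclideanSpace ℝ (Fin n))) (hX : IsCompact X)
    (β : ℝ) (hβ : 0 < β)
    (x d : ℝ → EuclideanSpace ℝ (Fin n))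
    (hxX : ∀ t, 0 ≤ t → x t ∈ X)
    (hInt : ∀ t, 0 ≤ t → IntervalIntegrable d volume 0 t)
    (hAC : ∀ t, 0 ≤ t → x t = x 0 + ∫ s in (0:ℝ)..t, d s)
    (C : ℝ) (hbd : ∀ᵐ t ∂(volume.restrict (Set.Ici (0:ℝ))), ‖d t‖ ≤ C)
    (v : EuclideanSpace ℝ (Fin n) → ℝ) (hv : ContDiff ℝ 1 v) :
    IntegrableOn (fun t => Real.exp (-β * t) * fderiv ℝ v (x t) (d t)) (Set.Ici (0:ℝ))
      volume ∧
    ∫ t in Set.Ici (0:ℝ), Real.exp (-β * t) * fderiv ℝ v (x t) (d t)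
      = β * (∫ t in Set.Ici (0:ℝ), Real.exp (-β * t) * v (x t)) - v (x 0) := by
  obtain ⟨M, hM⟩ := exists_ae_norm_fderiv_apply_le hX
    (ae_restrict_of_forall_mem measurableSet_Ici hxX) hbd hv
  exact discounted_integration_by_parts_general hβ ⟨hInt, hAC⟩ hv hM
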